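/- arXiv:0808.2753 — 2 statements merged into one kernel-verified Lean document; each statement's English description precedes it below -/
import Mathlib

section
/- Let G be a finite abelian group (written multiplicatively) of order n with elements a_1,...,a_n, and let b_1,...,b_n ∈ G. Then there exists a permutation π ∈ S_n such that the products a_1·b_{π(1)}, ..., a_n·b_{π(n)} are pairwise distinct if and only if b_1·b_2···b_n equals the identity element of G. -/
/-- `b` is a quotient of two enumerations of `G`. -/
def HallP {G ι : Type*} [CommGroup G] (b : ι → G) : Prop :=
  ∃ a c : ι → G, Function.Bijective a ∧ Function.Bijective c ∧ ∀ i, c i = a i * b i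

/-- Orbit of `u` under `t`, stopped at `v`. -/
inductive HallR {G : Type*} (t : G → G) (u v : G) : G → Prop
  | base : HallR t u v u
  | step (y : G) : HallR t u v y → t y ≠ v → HallR t u v (t y)

theorem hall_extend {G ι : Type*} [Fintype G] [Fintype ι]
    (hcard : Fintype.card ι = Fintype.card G) (f : ι → G) (i₁ : ι)
    (hf : ∀ i j, i ≠ i₁ → j ≠ i₁ → f i = f j → i = j) :
    ∃ g : ι → G, Function.Bijective g ∧ ∀ i, i ≠ i₁ → g i = f i := by
  classical
  have h1 : ((Finset.univ.erase i₁).image f).card < (Finset.univ : Finset G).card := by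
    refine lt_of_le_of_lt Finset.card_image_le ?_
    rw [Finset.card_univ, ← hcard, ← Finset.card_univ]
    exact Finset.card_erase_lt_of_mem (Finset.mem_univ _)
  obtain ⟨y, -, hy⟩ := Finset.exists_mem_notMem_of_card_lt_card h1
  have hy' : ∀ i, i ≠ i₁ → f i ≠ y := by
    intro i hi h
    exact hy (Finset.mem_image.2 ⟨i, by simp [hi], h⟩)
  refine ⟨Function.update f i₁ y, ?_, fun i hi => by simp [hi]⟩
  rw [Fintype.bijective_iff_injective_and_card]
  refine ⟨?_, hcard⟩
  intro i j hij
  by_cases hi : i = i₁ <;> by_cases hj : j = i₁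
  · rw [hi, hj]
  · subst hi
    simp [hj] at hij
    exact absurd hij.symm (hy' j hj)
  · subst hj
    simp [hi] at hij
    exact absurd hij (hy' i hi)
  · simp [hi, hj] at hij
    exact hf i j hi hj hij

theorem hall_complete {G ι : Type*} [CommGroup G] [Fintype G] [Fintype ι]
    (hcard : Fintype.card ι = Fintype.card G) (f g b : ι → G) (i₁ : ι)
    (hf : ∀ i j, i ≠ i₁ → j ≠ i₁ → f i = f j → i = j)
    (hg : ∀ i j, i ≠ i₁ → j ≠ i₁ → g i = g j → i = j)
    (h : ∀ i, i ≠ i₁ → g i = f i * b i) (hb : ∏ i, b i = 1) : HallP b := by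
  classical
  obtain ⟨a, ha, haf⟩ := hall_extend hcard f i₁ hf
  obtain ⟨c, hc, hcg⟩ := hall_extend hcard g i₁ hg
  refine ⟨a, c, ha, hc, ?_⟩
  have h0 : ∀ i, i ≠ i₁ → c i = a i * b i := by
    intro i hi
    rw [haf i hi, hcg i hi, h i hi]
  have hp : ∏ i, c i = ∏ i, a i * b i := by
    rw [Finset.prod_mul_distrib, hb, mul_one, ha.prod_comp (fun x => x),
      hc.prod_comp (fun x => x)]
  intro i
  by_cases hi : i = i₁
  · subst hi
    rw [← Finset.mul_prod_erase _ c (Finset.mem_univ i),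
      ← Finset.mul_prod_erase _ (fun i => a i * b i) (Finset.mem_univ i)] at hp
    rw [Finset.prod_congr rfl (fun j hj => h0 j (Finset.ne_of_mem_erase hj))] at hp
    exact mul_right_cancel hp
  · exact h0 i hi

theorem hall_key {G ι : Type*} [CommGroup G] [Fintype G] [Fintype ι]
    (hcard : Fintype.card ι = Fintype.card G) (b b' : ι → G) (i₀ i₁ : ι) (hne : i₀ ≠ i₁)
    (hb : HallP b) (h : ∀ i, i ≠ i₀ → i ≠ i₁ → b' i = b i) (hb' : ∏ i, b' i = 1) :
    HallP b' := by
  classical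
  obtain ⟨a, c, ha, hc, hac⟩ := hb
  obtain ⟨K, hK⟩ : ∃ K, K = a i₀ * a i₁ * b' i₀ := ⟨_, rfl⟩
  let e := Equiv.ofBijective c hc
  let t : G → G := fun x => a (e.symm (K / x))
  have ht : ∀ s z, c s = K / z → a s = t z := by
    intro s z hs
    simp only [t]
    rw [← hs]
    congr 1
    exact (e.symm_apply_apply s).symm
  have ht' : ∀ s z, a s = t z → c s = K / z := by
    intro s z hs
    have := ha.1 hs
    rw [this]
    exact e.apply_symm_apply _
  let R := HallR t (a i₁) (a i₀)
  have hu : a i₀ ≠ a i₁ := fun h => hne (ha.1 h)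
  have R1 : ∀ y, R y → y ≠ a i₀ := by
    intro y hy
    cases hy with
    | base => exact hu.symm
    | step y h1 h2 => exact h2
  have R2 : ∀ s, s ≠ i₁ → R (a s) → R (K / c s) := by
    intro s hs hR
    obtain ⟨y, hy⟩ : ∃ y, y = a s := ⟨_, rfl⟩
    rw [← hy] at hR
    cases hR with
    | base => exact absurd (ha.1 hy).symm hs
    | step z h1 h2 =>
      rw [ht' s z hy.symm]
      simpa using h1
  have R3 : ∀ z s, R z → c s = K / z → s ≠ i₀ → R (a s) := by
    intro z s hz hs h0
    rw [ht s z hs]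
    refine HallR.step z hz ?_
    rw [← ht s z hs]
    exact fun h => h0 (ha.1 h)
  have Rb : R (a i₁) := HallR.base
  have R0 : ¬ R (a i₀) := fun h => R1 _ h rfl
  refine hall_complete hcard (fun s => if R (a s) then K / c s else a s)
    (fun s => if s = i₀ then K / a i₁ else if R (a s) then K / a s else c s) b' i₁ ?_ ?_ ?_ hb'
  · intro i j hi hj hij
    split_ifs at hij with h1 h2 h2
    · exact hc.1 (div_right_injective hij)
    · exact absurd (hij ▸ R2 i hi h1) h2
    · exact absurd (hij ▸ R2 j hj h2) h1
    · exact ha.1 hij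
  · intro i j hi hj hij
    split_ifs at hij with h1 h2 h3 h2 h3 h4 h3 h4
    · rw [h1, h2]
    · exact absurd (ha.1 (div_right_injective hij)).symm hj
    · exact absurd (R3 _ j Rb hij.symm h2) h3
    · exact absurd (ha.1 (div_right_injective hij)) hi
    · exact ha.1 (div_right_injective hij)
    · exact absurd (R3 (a i) j (by assumption) hij.symm (by assumption)) (by assumption)
    · exact absurd (R3 _ i Rb hij h1) (by assumption)
    · exact absurd (R3 _ i (by assumption) hij h1) (by assumption)
    · exact hc.1 hij
  · intro i hi
    by_cases h0 : i = i₀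
    · subst h0
      rw [if_pos rfl, if_neg R0, hK, div_eq_iff_eq_mul]
      exact mul_right_comm _ _ _
    · rw [if_neg h0, h i h0 hi]
      split_ifs with h1
      · rw [hac i, div_mul_eq_mul_div, mul_div_mul_right_eq_div]
      · exact hac i

theorem hall_main {G ι : Type*} [CommGroup G] [Fintype G] [Fintype ι]
    (hcard : Fintype.card ι = Fintype.card G) (k : ℕ) : ∀ b : ι → G,
    Set.ncard {i | b i ≠ 1} = k → ∏ i, b i = 1 → HallP b := by
  classical
  induction k using Nat.strong_induction_on with
  | _ k ih =>
  intro b hk hb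
  by_cases h1 : ∀ i, b i = 1
  · let e := Fintype.equivOfCardEq hcard
    exact ⟨e, e, e.bijective, e.bijective, fun i => by rw [h1, mul_one]⟩
  · push Not at h1
    obtain ⟨i₀, h0⟩ := h1
    obtain ⟨i₁, hne, h1⟩ : ∃ i₁, i₀ ≠ i₁ ∧ b i₁ ≠ 1 := by
      by_contra! hcon
      rw [Finset.prod_eq_single i₀ (fun j _ hj => hcon j hj.symm) (by simp)] at hb
      exact h0 hb
    let d : ι → G := Function.update (Function.update b i₁ (b i₀ * b i₁)) i₀ 1
    have hd0 : d i₀ = 1 := by simp [d]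
    have hd1 : d i₁ = b i₀ * b i₁ := by simp [d, hne.symm]
    have hd : ∀ i, i ≠ i₀ → i ≠ i₁ → d i = b i := fun i h h' => by simp [d, h, h']
    have hdp : ∏ i, d i = 1 := by
      rw [← hb, ← Finset.mul_prod_erase _ d (Finset.mem_univ i₀),
        ← Finset.mul_prod_erase _ b (Finset.mem_univ i₀),
        ← Finset.mul_prod_erase _ d (Finset.mem_erase.2 ⟨hne.symm, Finset.mem_univ i₁⟩),
        ← Finset.mul_prod_erase _ b (Finset.mem_erase.2 ⟨hne.symm, Finset.mem_univ i₁⟩),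
        hd0, hd1, one_mul, mul_assoc]
      congr 2
      refine Finset.prod_congr rfl fun j hj => ?_
      simp only [Finset.mem_erase] at hj
      exact hd j hj.2.1 hj.1
    refine hall_key hcard d b i₀ i₁ hne (ih _ ?_ d rfl hdp) (fun i h h' => (hd i h h').symm) hb
    rw [← hk]
    refine Set.ncard_lt_ncard ?_ (Set.toFinite _)
    refine (Set.ssubset_iff_of_subset ?_).2 ⟨i₀, h0, by simp [hd0]⟩
    intro i hi
    by_cases e0 : i = i₀
    · rw [e0]; exact h0
    by_cases e1 : i = i₁
    · rw [e1]; exact h1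
    have hi' : d i ≠ 1 := hi
    rwa [hd i e0 e1] at hi'

/-- M. Hall's theorem: for an enumeration `a` of a finite abelian group `G` of order `n`
and elements `b 1, ..., b n`, there is a permutation `π` with the `a i * b (π i)` pairwise
distinct iff the product of the `b i` is the identity. -/
theorem hall_complete_mapping {G : Type*} [CommGroup G] [Fintype G] {n : ℕ}
    (a b : Fin n → G) (ha : Function.Bijective a) :
    (∃ π : Equiv.Perm (Fin n), Function.Injective (fun i => a i * b (π i))) ↔
      ∏ i, b i = 1 := by
  have hcard := Fintype.card_of_bijective ha
  constructor
  · rintro ⟨π, hπ⟩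
    have hbij := (Fintype.bijective_iff_injective_and_card _).2 ⟨hπ, hcard⟩
    have h1 := hbij.prod_comp (fun x => x)
    rw [Finset.prod_mul_distrib, ← ha.prod_comp (fun x => x), Equiv.prod_comp π b] at h1
    exact mul_eq_left.1 h1
  · intro hb
    obtain ⟨a', c, ha', hc, h⟩ := hall_main hcard _ b rfl hb
    let π : Equiv.Perm (Fin n) :=
      (Equiv.ofBijective a ha).trans (Equiv.ofBijective a' ha').symm
    refine ⟨π, ?_⟩
    have h2 : ∀ i, a i = a' (π i) := fun i =>
      ((Equiv.ofBijective a' ha').apply_symm_apply (a i)).symm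
    intro i j hij
    dsimp only at hij
    rw [h2 i, h2 j, ← h, ← h] at hij
    exact π.injective (hc.1 hij)
end

section
/- Let λ_1,...,λ_k be complex n-th roots of unity and c_1,...,c_k nonnegative integers with c_1λ_1 + ··· + c_kλ_k = 0. Then c_1 + ··· + c_k can be written as Σ_{p | n} p·x_p, where the sum is over the prime divisors p of n and each x_p is a nonnegative integer. -/
/-- Membership in the numerical semigroup generated by the prime divisors of `n`. -/
def InPrimeSemigroup (n m : ℕ) : Prop := ∃ x : ℕ → ℕ, m = ∑ p ∈ n.primeFactors, p * x p

theorem inPrimeSemigroup_add {n a b : ℕ} (ha : InPrimeSemigroup n a)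
    (hb : InPrimeSemigroup n b) : InPrimeSemigroup n (a + b) := by
  obtain ⟨x, hx⟩ := ha
  obtain ⟨y, hy⟩ := hb
  refine ⟨fun p => x p + y p, ?_⟩
  simp only [mul_add, Finset.sum_add_distrib]
  rw [← hx, ← hy]

theorem inPrimeSemigroup_of_not_coprime {n a : ℕ} (hn : 1 ≤ n) (h : ¬ a.Coprime n) :
    InPrimeSemigroup n a := by
  obtain ⟨p, hp, hpa, hpn⟩ := Nat.Prime.not_coprime_iff_dvd.mp h
  obtain ⟨q, rfl⟩ := hpa
  refine ⟨fun r => if r = p then q else 0, ?_⟩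
  have hmem : p ∈ n.primeFactors := Nat.mem_primeFactors.mpr ⟨hp, hpn, by omega⟩
  simp [Finset.sum_ite_eq', hp, hpn, show n ≠ 0 by omega]

/-- Galois conjugation: power sums of exponent coprime to `n` vanish too. -/
theorem psum_vanish {σ : Type*} [Fintype σ] {n : ℕ} (hn : 1 ≤ n) (α : σ → ℂ)
    (hα : ∀ i, α i ^ n = 1) (h : ∑ i, α i = 0) {j : ℕ} (hj : j.Coprime n) :
    ∑ i, α i ^ j = 0 := by
  have hn0 : n ≠ 0 := by omega
  have : NeZero n := ⟨hn0⟩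
  have hζ := Complex.isPrimitiveRoot_exp n hn0
  generalize Complex.exp (2 * Real.pi * Complex.I / n) = ζ at hζ
  have hex : ∀ i, ∃ a : ℕ, ζ ^ a = α i := fun i => by
    obtain ⟨a, -, ha⟩ := hζ.eq_pow_of_pow_eq_one (hα i)
    exact ⟨a, ha⟩
  choose a ha using hex
  let P : Polynomial ℤ := ∑ i, Polynomial.X ^ a i
  have hP : ∀ z : ℂ, Polynomial.aeval z P = ∑ i, z ^ a i := fun z => by simp [P]
  have h0 : Polynomial.aeval ζ P = 0 := by
    rw [hP]; simpa [ha] using h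
  have hdvd := minpoly.isIntegrallyClosed_dvd (hζ.isIntegral (by omega)) h0
  rw [hζ.minpoly_eq_pow_coprime hj] at hdvd
  obtain ⟨Q, hQ⟩ := hdvd
  have h1 : Polynomial.aeval (ζ ^ j) P = 0 := by
    rw [hQ, map_mul, minpoly.aeval, zero_mul]
  rw [hP] at h1
  rw [← h1]
  refine Finset.sum_congr rfl fun i _ => ?_
  rw [← ha i, ← pow_mul, ← pow_mul, mul_comm]

theorem esymm_support {σ : Type*} [Fintype σ] {n : ℕ} (hn : 1 ≤ n) (α : σ → ℂ)
    (hα : ∀ i, α i ^ n = 1) (h : ∑ i, α i = 0) (m : ℕ)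
    (hm : MvPolynomial.aeval α (MvPolynomial.esymm σ ℂ m) ≠ 0) : InPrimeSemigroup n m := by
  classical
  induction m using Nat.strong_induction_on with
  | _ m ih =>
  rcases Nat.eq_zero_or_pos m with rfl | hpos
  · exact ⟨fun _ => 0, by simp⟩
  have hN := congrArg (MvPolynomial.aeval α) (MvPolynomial.mul_esymm_eq_sum σ ℂ m)
  have hne : MvPolynomial.aeval α ((m : MvPolynomial σ ℂ) * MvPolynomial.esymm σ ℂ m) ≠ 0 := by
    rw [map_mul, map_natCast]
    exact mul_ne_zero (by exact_mod_cast hpos.ne') hm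
  rw [hN, map_mul, map_sum] at hne
  obtain ⟨⟨b, d⟩, hmem, hbd⟩ := Finset.exists_ne_zero_of_sum_ne_zero (right_ne_zero_of_mul hne)
  rw [map_mul, map_mul] at hbd
  have hd := right_ne_zero_of_mul hbd
  have hb := right_ne_zero_of_mul (left_ne_zero_of_mul hbd)
  rw [Finset.mem_filter] at hmem
  obtain ⟨hs, hlt⟩ := hmem
  rw [← show b + d = m from Finset.HasAntidiagonal.mem_antidiagonal.mp hs]
  refine inPrimeSemigroup_add (ih b hlt hb) (inPrimeSemigroup_of_not_coprime hn fun hc => hd ?_)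
  simpa [MvPolynomial.psum] using psum_vanish hn α hα h hc

/-- Sun's lemma on vanishing sums of roots of unity: if `λ_1, ..., λ_k` are complex
`n`-th roots of unity and `c_1 λ_1 + ⋯ + c_k λ_k = 0` with `c_i ∈ ℕ`, then
`c_1 + ⋯ + c_k = Σ_{p ∣ n} p * x_p` for some nonnegative integers `x_p`. -/
theorem sun_vanishing_roots {n k : ℕ} (hn : 1 ≤ n) (lam : Fin k → ℂ)
    (hlam : ∀ i, lam i ^ n = 1) (c : Fin k → ℕ)
    (h : ∑ i, (c i : ℂ) * lam i = 0) :
    ∃ x : ℕ → ℕ, ∑ i, c i = ∑ p ∈ n.primeFactors, p * x p := by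
  have key := esymm_support (σ := Σ i : Fin k, Fin (c i)) hn (fun s => lam s.1)
    (fun s => hlam s.1) (by rw [Fintype.sum_sigma]; simpa using h) (∑ i, c i)
  apply key
  have hcard : ∑ i, c i = (Finset.univ : Finset (Σ i : Fin k, Fin (c i))).card := by
    simp
  rw [hcard, MvPolynomial.esymm, Finset.powersetCard_self, Finset.sum_singleton, map_prod]
  refine Finset.prod_ne_zero_iff.mpr fun s _ hs => ?_
  rw [MvPolynomial.aeval_X] at hs
  have := hlam s.1
  rw [hs, zero_pow (by omega)] at this
  exact zero_ne_one this
end
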